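/- arXiv:1503.08467 — 5 statements merged into one kernel-verified Lean document; each statement's English description precedes it below -/
import Mathlib

section
/- A nonempty topological space X is connected if, and only if, X is not the union of a discrete family, having more than one member, of nonempty proper subsets of X. -/
namespace SSG

/-- A family of subsets of a topological space is *discrete* if every point has a
neighborhood meeting at most one member of the family. -/
def IsDiscreteFam {X : Type*} [TopologicalSpace X] (𝒜 : Set (Set X)) : Prop :=
  ∀ x : X, ∃ U ∈ nhds x, {A | A ∈ 𝒜 ∧ (A ∩ U).Nonempty}.Subsingleton

/-- A family of open subsets covering the whole space. -/
def IsOpenCover {X : Type*} [TopologicalSpace X] (𝒰 : Set (Set X)) : Prop :=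
  (∀ U ∈ 𝒰, IsOpen U) ∧ ⋃₀ 𝒰 = Set.univ

/-- A legal move of TWO in the selective strong screenability game, in response to the
open cover `𝒰` played by ONE: a discrete family of open sets, each contained in some
member of `𝒰`. -/
def LegalTwoMove {X : Type*} [TopologicalSpace X] (𝒰 𝒱 : Set (Set X)) : Prop :=
  IsDiscreteFam 𝒱 ∧ ∀ V ∈ 𝒱, IsOpen V ∧ ∃ U ∈ 𝒰, V ⊆ U

/-- ONE has a winning strategy in the game `G^ω_d(𝒪, 𝒪_Y)` on `X`:
there is a strategy `σ` (a function from finite histories of TWO's moves to open covers)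
such that for every play in which TWO moves legally, the union of TWO's families fails
to cover `Y`. -/
def OneWinsGomega (X : Type*) [TopologicalSpace X] (Y : Set X) : Prop :=
  ∃ σ : List (Set (Set X)) → Set (Set X),
    (∀ h : List (Set (Set X)), IsOpenCover (σ h)) ∧
    ∀ V : ℕ → Set (Set X),
      (∀ n : ℕ, LegalTwoMove (σ (List.ofFn fun i : Fin n => V i)) (V n)) →
      ¬ Y ⊆ ⋃ n : ℕ, ⋃₀ V n

/-- TWO has a winning strategy in the game `G^ω_d(𝒪, 𝒪_Y)` on `X`:
a strategy `τ` (from finite histories of ONE's moves, including the current inning's move,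
to TWO's responses) such that against any sequence of open covers played by ONE, all of
TWO's responses are legal and their union covers `Y`. -/
def TwoWinsGomega (X : Type*) [TopologicalSpace X] (Y : Set X) : Prop :=
  ∃ τ : List (Set (Set X)) → Set (Set X),
    ∀ U : ℕ → Set (Set X), (∀ n : ℕ, IsOpenCover (U n)) →
      (∀ n : ℕ, LegalTwoMove (U n) (τ (List.ofFn fun i : Fin (n+1) => U i))) ∧
      Y ⊆ ⋃ n : ℕ, ⋃₀ τ (List.ofFn fun i : Fin (n+1) => U i)

/-- TWO has a winning strategy in the one-inning game `G^1_d(𝒪, 𝒪_Y)` on `X`: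
every open cover of `X` admits a discrete family of open sets, each contained in some
member of the cover, whose union contains `Y`. -/
def TwoWinsGone (X : Type*) [TopologicalSpace X] (Y : Set X) : Prop :=
  ∀ 𝒰 : Set (Set X), IsOpenCover 𝒰 →
    ∃ 𝒱 : Set (Set X), LegalTwoMove 𝒰 𝒱 ∧ Y ⊆ ⋃₀ 𝒱

/-- ONE has a winning strategy in the Banach–Mazur game `MB(Y,X)`: a strategy `σ`
(from finite histories of TWO's moves to ONE's next move) which always produces a legal
move (a nonempty open set contained in TWO's last move) whenever TWO has moved legally
so far, and such that for every play in which TWO moves legally,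
`Y ∩ ⋂ₙ Oₙ` is nonempty. -/
def OneWinsMB (X : Type*) [TopologicalSpace X] (Y : Set X) : Prop :=
  ∃ σ : List (Set X) → Set X,
    (∀ T : ℕ → Set X, ∀ n : ℕ,
      (∀ k : ℕ, k < n → IsOpen (T k) ∧ (T k).Nonempty ∧
          T k ⊆ σ (List.ofFn fun i : Fin k => T i)) →
      IsOpen (σ (List.ofFn fun i : Fin n => T i)) ∧
      (σ (List.ofFn fun i : Fin n => T i)).Nonempty ∧
      ∀ k : ℕ, n = k + 1 → σ (List.ofFn fun i : Fin n => T i) ⊆ T k) ∧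
    ∀ T : ℕ → Set X,
      (∀ n : ℕ, IsOpen (T n) ∧ (T n).Nonempty ∧
          T n ⊆ σ (List.ofFn fun i : Fin n => T i)) →
      (Y ∩ ⋂ n : ℕ, σ (List.ofFn fun i : Fin n => T i)).Nonempty

/-- TWO has a winning strategy in the Banach–Mazur game `MB(Y,X)`: a strategy `τ`
(from finite histories of ONE's moves to TWO's next move) which always produces a legal
move (a nonempty open subset of ONE's last move) whenever ONE has moved legally
so far, and such that for every play in which ONE moves legally,
`Y ∩ ⋂ₙ Oₙ` is empty. -/
def TwoWinsMB (X : Type*) [TopologicalSpace X] (Y : Set X) : Prop :=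
  ∃ τ : List (Set X) → Set X,
    (∀ O : ℕ → Set X, ∀ n : ℕ,
      (∀ k : ℕ, k ≤ n → IsOpen (O k) ∧ (O k).Nonempty ∧
          ∀ j : ℕ, k = j + 1 → O k ⊆ τ (List.ofFn fun i : Fin (j+1) => O i)) →
      IsOpen (τ (List.ofFn fun i : Fin (n+1) => O i)) ∧
      (τ (List.ofFn fun i : Fin (n+1) => O i)).Nonempty ∧
      τ (List.ofFn fun i : Fin (n+1) => O i) ⊆ O n) ∧
    ∀ O : ℕ → Set X,
      (∀ n : ℕ, IsOpen (O n) ∧ (O n).Nonempty ∧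
          ∀ j : ℕ, n = j + 1 → O n ⊆ τ (List.ofFn fun i : Fin (j+1) => O i)) →
      Y ∩ ⋂ n : ℕ, O n = ∅

/-- A space is ultraparacompact if every open cover has a refinement by pairwise
disjoint open sets still covering the space. -/
def Ultraparacompact (X : Type*) [TopologicalSpace X] : Prop :=
  ∀ 𝒰 : Set (Set X), IsOpenCover 𝒰 →
    ∃ 𝒱 : Set (Set X), (∀ V ∈ 𝒱, IsOpen V ∧ ∃ U ∈ 𝒰, V ⊆ U) ∧
      𝒱.Pairwise Disjoint ∧ ⋃₀ 𝒱 = Set.univ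

/-- A space is zero-dimensional if every point has a neighborhood basis of clopen sets. -/
def ZeroDimensional (X : Type*) [TopologicalSpace X] : Prop :=
  ∀ (x : X) (U : Set X), IsOpen U → x ∈ U → ∃ V : Set X, IsClopen V ∧ x ∈ V ∧ V ⊆ U

/-- A space is strongly zero-dimensional if every *finite* open cover has a refinement
by pairwise disjoint open sets still covering the space. -/
def StronglyZeroDim (X : Type*) [TopologicalSpace X] : Prop :=
  ∀ 𝒰 : Set (Set X), 𝒰.Finite → IsOpenCover 𝒰 →
    ∃ 𝒱 : Set (Set X), (∀ V ∈ 𝒱, IsOpen V ∧ ∃ U ∈ 𝒰, V ⊆ U) ∧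
      𝒱.Pairwise Disjoint ∧ ⋃₀ 𝒱 = Set.univ

/-- `X` has a π-base consisting of nontrivial connected (open) sets. -/
def HasConnectedPiBase (X : Type*) [TopologicalSpace X] : Prop :=
  ∃ P : Set (Set X), (∀ B ∈ P, IsOpen B ∧ IsConnected B ∧ B.Nontrivial) ∧
    ∀ U : Set X, IsOpen U → U.Nonempty → ∃ B ∈ P, B ⊆ U

/-!
Two members of a discrete family that meet a common small neighborhood coincide, so the members of
a discrete cover of `X` are pairwise disjoint and open, hence clopen, and a connected space admits
no such cover by nonempty proper sets. Conversely, a nonempty proper clopen set `s` splits `X` into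
the discrete cover `{s, sᶜ}`.
-/

section DiscreteFamilies

variable {X : Type*} [TopologicalSpace X] {𝒜 : Set (Set X)} {A s : Set X}

theorem IsDiscreteFam.pairwiseDisjoint (h𝒜 : IsDiscreteFam 𝒜) : 𝒜.PairwiseDisjoint id := by
  intro A hA B hB hAB
  refine Set.disjoint_left.2 fun x hxA hxB => hAB ?_
  obtain ⟨U, hU, hsub⟩ := h𝒜 x
  have hxU : x ∈ U := mem_of_mem_nhds hU
  exact hsub ⟨hA, x, hxA, hxU⟩ ⟨hB, x, hxB, hxU⟩

theorem IsDiscreteFam.isOpen (h𝒜 : IsDiscreteFam 𝒜) (hopen : IsOpen (⋃₀ 𝒜)) (hA : A ∈ 𝒜) :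
    IsOpen A := by
  refine isOpen_iff_mem_nhds.2 fun x hx => ?_
  obtain ⟨U, hU, hsub⟩ := h𝒜 x
  filter_upwards [hU, hopen.mem_nhds ⟨A, hA, hx⟩]
  rintro y hyU ⟨B, hB, hyB⟩
  have hBA : B = A := hsub ⟨hB, y, hyB, hyU⟩ ⟨hA, x, hx, mem_of_mem_nhds hU⟩
  exact hBA ▸ hyB

theorem IsDiscreteFam.isClopen (h𝒜 : IsDiscreteFam 𝒜) (hclopen : IsClopen (⋃₀ 𝒜))
    (hA : A ∈ 𝒜) : IsClopen A := by
  have hothers : IsOpen (⋃₀ (𝒜 \ {A})) :=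
    isOpen_sUnion fun B hB => h𝒜.isOpen hclopen.isOpen hB.1
  have hdisj : Disjoint A (⋃₀ (𝒜 \ {A})) :=
    Set.disjoint_sUnion_right.2 fun B hB => h𝒜.pairwiseDisjoint hA hB.1 (Ne.symm hB.2)
  have hunion : A ∪ ⋃₀ (𝒜 \ {A}) = ⋃₀ 𝒜 := by
    rw [← Set.sUnion_insert, Set.insert_sdiff_singleton, Set.insert_eq_of_mem hA]
  have hA_eq : ⋃₀ 𝒜 \ ⋃₀ (𝒜 \ {A}) = A := by
    rw [← hunion, Set.union_sdiff_cancel_right hdisj.le_bot]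
  exact ⟨hA_eq ▸ hclopen.isClosed.sdiff hothers, h𝒜.isOpen hclopen.isOpen hA⟩

theorem isDiscreteFam_of_pairwiseDisjoint_of_isOpen (hdisj : 𝒜.PairwiseDisjoint id)
    (hopen : ∀ A ∈ 𝒜, IsOpen A) (hclosed : IsClosed (⋃₀ 𝒜)) : IsDiscreteFam 𝒜 := by
  intro x
  by_cases hx : x ∈ ⋃₀ 𝒜
  · obtain ⟨A, hA, hxA⟩ := hx
    refine ⟨A, (hopen A hA).mem_nhds hxA, Set.subsingleton_of_forall_eq A ?_⟩
    rintro B ⟨hB, y, hyB, hyA⟩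
    exact hdisj.elim_set hB hA y hyB hyA
  · refine ⟨(⋃₀ 𝒜)ᶜ, hclosed.isOpen_compl.mem_nhds hx, ?_⟩
    rintro B ⟨hB, y, hyB, hy⟩
    exact absurd ⟨B, hB, hyB⟩ hy

theorem isDiscreteFam_pair_compl (hs : IsClopen s) : IsDiscreteFam {s, sᶜ} := by
  refine isDiscreteFam_of_pairwiseDisjoint_of_isOpen ?_ ?_ ?_
  · exact Set.pairwise_pair_of_symm.2 fun _ => disjoint_compl_right
  · rintro A (rfl | rfl)
    exacts [hs.isOpen, hs.compl.isOpen]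
  · rw [Set.sUnion_pair, Set.union_compl_self]
    exact isClosed_univ

end DiscreteFamilies

/-- A nonempty space is connected iff it is not the union of a discrete
family, having more than one member, of nonempty proper subsets. -/
theorem statement1 {X : Type*} [TopologicalSpace X] [Nonempty X] :
    ConnectedSpace X ↔
      ¬ ∃ 𝒜 : Set (Set X), IsDiscreteFam 𝒜 ∧ 𝒜.Nontrivial ∧
        (∀ A ∈ 𝒜, A.Nonempty ∧ A ≠ Set.univ) ∧ ⋃₀ 𝒜 = Set.univ := by
  constructor
  · rintro hX ⟨𝒜, h𝒜, hnontrivial, hproper, hcover⟩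
    obtain ⟨A, hA⟩ := hnontrivial.nonempty
    have hA_clopen : IsClopen A := h𝒜.isClopen (hcover ▸ isClopen_univ) hA
    obtain ⟨hA_nonempty, hA_proper⟩ := hproper A hA
    exact (isClopen_iff.1 hA_clopen).elim hA_nonempty.ne_empty hA_proper
  · refine fun hno => connectedSpace_iff_clopen.2 ⟨inferInstance, fun s hs => ?_⟩
    by_contra! hs_proper
    obtain ⟨hs_nonempty, hs_ne_univ⟩ := hs_proper
    refine hno ⟨{s, sᶜ}, isDiscreteFam_pair_compl hs, Set.nontrivial_pair ne_compl_self, ?_, ?_⟩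
    · rintro A (rfl | rfl)
      · exact ⟨hs_nonempty, hs_ne_univ⟩
      · exact ⟨Set.nonempty_compl.2 hs_ne_univ, Set.compl_ne_univ.2 hs_nonempty⟩
    · rw [Set.sUnion_pair, Set.union_compl_self]

end SSG
end

section
/- Player ONE has a winning strategy in the game G^ω_d(𝒪,𝒪_ℙ) on the real line ℝ, where ℙ is the set of irrational numbers. -/
namespace SSG

/-!
Every point of a space has a neighbourhood meeting at most one member of a discrete family, so the
closures of the members are relatively clopen in the closure of the union. A connected set `B`
inside the closure of the union therefore lies in the closure of a single member. If ONE covers the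
space by open sets none of which is dense in `B`, TWO's family cannot be dense in `B`, and the
complement of its closure leaves an open part of `B` to continue in. This turns each inning of
`G^ω_d(𝒪, 𝒪_Y)` into an inning of the Banach–Mazur game `MB(Y, X)` whose player TWO moves into that
remaining part; a winning strategy of ONE there produces a point of `Y` that escapes every family.
When `Y` contains the intersection of dense open sets `D n` of a locally compact space, ONE wins
`MB(Y, X)` by always moving with compact closure inside TWO's last move and the next `D n`.
-/

open Set

section DiscreteFamilies

variable {X : Type*} [TopologicalSpace X]

namespace IsDiscreteFam

variable {𝒜 : Set (Set X)}

theorem locallyFinite (h𝒜 : IsDiscreteFam 𝒜) : LocallyFinite fun A : 𝒜 => (A : Set X) := fun x => by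
  obtain ⟨U, hU, hsub⟩ := h𝒜 x
  refine ⟨U, hU, Set.Subsingleton.finite fun A hA B hB => Subtype.ext ?_⟩
  exact hsub ⟨A.2, hA⟩ ⟨B.2, hB⟩

theorem closure_sUnion (h𝒜 : IsDiscreteFam 𝒜) : closure (⋃₀ 𝒜) = ⋃ A : 𝒜, closure (A : Set X) := by
  rw [sUnion_eq_iUnion, h𝒜.locallyFinite.closure_iUnion]

theorem disjoint_closure_closure_sUnion_sdiff (h𝒜 : IsDiscreteFam 𝒜) {A : Set X} (hA : A ∈ 𝒜) :
    Disjoint (closure A) (closure (⋃₀ (𝒜 \ {A}))) := by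
  refine disjoint_left.2 fun x hxA hx => ?_
  obtain ⟨U, hU, hsub⟩ := h𝒜 x
  obtain ⟨y, hyU, hyA⟩ := mem_closure_iff_nhds.1 hxA U hU
  obtain ⟨z, hzU, B, ⟨hB, hBA⟩, hzB⟩ := mem_closure_iff_nhds.1 hx U hU
  exact hBA (hsub ⟨hB, z, hzB, hzU⟩ ⟨hA, y, hyA, hyU⟩)

theorem exists_subset_closure_of_isConnected (h𝒜 : IsDiscreteFam 𝒜) {B : Set X}
    (hB : IsConnected B) (hB𝒜 : B ⊆ closure (⋃₀ 𝒜)) : ∃ A ∈ 𝒜, B ⊆ closure A := by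
  obtain ⟨x, hx⟩ := hB.nonempty
  obtain ⟨⟨A, hA⟩, hxA⟩ := mem_iUnion.1 (h𝒜.closure_sUnion ▸ hB𝒜 hx)
  refine ⟨A, hA, ?_⟩
  have hdisj := h𝒜.disjoint_closure_closure_sUnion_sdiff hA
  have hcover : B ⊆ closure A ∪ closure (⋃₀ (𝒜 \ {A})) := by
    rwa [← closure_union, ← sUnion_insert, insert_sdiff_singleton, insert_eq_of_mem hA]
  have hsplit : B ⊆ closure A ∨ B ⊆ closure (⋃₀ (𝒜 \ {A})) :=
    isPreconnected_iff_subset_of_disjoint_closed.1 hB.isPreconnected _ _ isClosed_closure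
      isClosed_closure hcover (by rw [hdisj.inter_eq, inter_empty])
  exact hsplit.resolve_right fun h => hdisj.notMem_of_mem_left hxA (h hx)

end IsDiscreteFam

end DiscreteFamilies

section BanachMazur

variable {X : Type*}

/-- The set in which ONE has to move next in the Banach–Mazur game on `X` after the history `h` of
TWO's moves: TWO's last move, or the whole space in the first inning. -/
def lastMove (h : List (Set X)) : Set X :=
  h.getLastD univ

theorem lastMove_ofFn_succ (T : ℕ → Set X) (n : ℕ) :
    lastMove (List.ofFn fun i : Fin (n + 1) => T i) = T n := by
  rw [lastMove, List.ofFn_succ_last, List.getLastD_concat, Fin.val_last]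

variable [TopologicalSpace X]

theorem isOpen_and_nonempty_lastMove_ofFn [Nonempty X] {T : ℕ → Set X} {n : ℕ}
    (hT : ∀ k < n, IsOpen (T k) ∧ (T k).Nonempty) :
    IsOpen (lastMove (List.ofFn fun i : Fin n => T i)) ∧
      (lastMove (List.ofFn fun i : Fin n => T i)).Nonempty := by
  cases n with
  | zero => exact ⟨isOpen_univ, univ_nonempty⟩
  | succ n => simpa only [lastMove_ofFn_succ] using hT n n.lt_succ_self

theorem exists_isOpen_isCompact_closure_subset [RegularSpace X] [LocallyCompactSpace X]
    {W : Set X} (hW : IsOpen W) (hne : W.Nonempty) :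
    ∃ O, IsOpen O ∧ O.Nonempty ∧ closure O ⊆ W ∧ IsCompact (closure O) := by
  obtain ⟨x, hx⟩ := hne
  obtain ⟨O, hO, hxO, hOW, hcomp⟩ :=
    exists_open_between_and_isCompact_closure isCompact_singleton hW (singleton_subset_iff.2 hx)
  exact ⟨O, hO, ⟨x, hxO rfl⟩, hOW, hcomp⟩

theorem nonempty_iInter_of_closure_succ_subset {O : ℕ → Set X} (hne : ∀ n, (O n).Nonempty)
    (hsucc : ∀ n, closure (O (n + 1)) ⊆ O n) (hcomp : IsCompact (closure (O 0))) :
    (⋂ n, O n).Nonempty := by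
  obtain ⟨x, hx⟩ := IsCompact.nonempty_iInter_of_sequence_nonempty_isCompact_isClosed
    (fun n => closure (O n)) (fun n => (hsucc n).trans subset_closure)
    (fun n => (hne n).closure) hcomp fun _ => isClosed_closure
  exact ⟨x, mem_iInter.2 fun n => hsucc n (mem_iInter.1 hx (n + 1))⟩

theorem oneWinsMB_of_mem_residual [RegularSpace X] [LocallyCompactSpace X] [Nonempty X]
    {Y : Set X} (hY : Y ∈ residual X) : OneWinsMB X Y := by
  obtain ⟨G, hGY, hGδ, hdense⟩ := mem_residual.1 hY
  obtain ⟨D, hD, rfl⟩ := hGδ.eq_iInter_nat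
  have exists_move (W : Set X) (n : ℕ) (hW : IsOpen W ∧ W.Nonempty) :
      ∃ O, IsOpen O ∧ O.Nonempty ∧ closure O ⊆ W ∩ D n ∧ IsCompact (closure O) :=
    exists_isOpen_isCompact_closure_subset (hW.1.inter (hD n))
      ((hdense.mono (iInter_subset D n)).inter_open_nonempty W hW.1 hW.2)
  choose! move isOpen_move move_nonempty closure_move_subset isCompact_closure_move
    using exists_move
  refine ⟨fun h => move (lastMove h) h.length, fun T n hT => ?_, fun T hT => ?_⟩
  · have hlast := isOpen_and_nonempty_lastMove_ofFn fun k hk => ⟨(hT k hk).1, (hT k hk).2.1⟩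
    refine ⟨isOpen_move _ _ hlast, move_nonempty _ _ hlast, ?_⟩
    rintro k rfl
    exact subset_closure.trans ((closure_move_subset _ _ hlast).trans
      (inter_subset_left.trans (lastMove_ofFn_succ T k).subset))
  · simp only [List.length_ofFn] at hT ⊢
    have hlast (n : ℕ) := isOpen_and_nonempty_lastMove_ofFn (n := n)
      fun k _ => ⟨(hT k).1, (hT k).2.1⟩
    have hsucc (n : ℕ) : closure (move (lastMove (List.ofFn fun i : Fin (n + 1) => T i)) (n + 1)) ⊆
        move (lastMove (List.ofFn fun i : Fin n => T i)) n :=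
      calc closure (move (lastMove (List.ofFn fun i : Fin (n + 1) => T i)) (n + 1))
        _ ⊆ lastMove (List.ofFn fun i : Fin (n + 1) => T i) :=
          (closure_move_subset _ _ (hlast (n + 1))).trans inter_subset_left
        _ = T n := lastMove_ofFn_succ T n
        _ ⊆ move (lastMove (List.ofFn fun i : Fin n => T i)) n := (hT n).2.2
    obtain ⟨x, hx⟩ := nonempty_iInter_of_closure_succ_subset
      (fun n => move_nonempty _ n (hlast n)) hsucc (isCompact_closure_move _ 0 (hlast 0))
    have hxD (n : ℕ) : x ∈ D n :=
      (closure_move_subset _ n (hlast n) (subset_closure (mem_iInter.1 hx n))).2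
    exact ⟨x, hGY (mem_iInter.2 hxD), hx⟩

end BanachMazur

section SelectiveScreenability

variable {X : Type*} [TopologicalSpace X]

/-- The cover ONE plays in `G^ω_d` to protect the set `B`: the open sets that are not dense in `B`.
Only nontrivial sets are ever protected; for the others all open sets are allowed, so that this is
an open cover for every `B`. -/
def nonDenseCover (B : Set X) : Set (Set X) :=
  {U | IsOpen U ∧ (B.Nontrivial → ¬ B ⊆ closure U)}

theorem isOpenCover_nonDenseCover [T2Space X] (B : Set X) : IsOpenCover (nonDenseCover B) := by
  refine ⟨fun U hU => hU.1, eq_univ_of_forall fun z => ?_⟩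
  by_cases hB : B.Nontrivial
  · obtain ⟨x, hx, hxz⟩ := hB.exists_ne z
    obtain ⟨U, W, hU, hW, hzU, hxW, hdisj⟩ := t2_separation hxz.symm
    exact ⟨U, ⟨hU, fun _ hsub => (hdisj.closure_left hW).notMem_of_mem_left (hsub hx) hxW⟩, hzU⟩
  · exact ⟨univ, ⟨isOpen_univ, fun h => absurd h hB⟩, mem_univ z⟩

theorem LegalTwoMove.not_subset_closure_sUnion {B : Set X} {𝒱 : Set (Set X)}
    (h𝒱 : LegalTwoMove (nonDenseCover B) 𝒱) (hconn : IsConnected B) (hnt : B.Nontrivial) :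
    ¬ B ⊆ closure (⋃₀ 𝒱) := fun hB => by
  obtain ⟨V, hV, hBV⟩ := h𝒱.1.exists_subset_closure_of_isConnected hconn hB
  obtain ⟨-, U, ⟨-, hU⟩, hVU⟩ := h𝒱.2 V hV
  exact hU hnt (hBV.trans (closure_mono hVU))

/-- The history of TWO in `MB(Y, X)` simulating a history of TWO in `G^ω_d(𝒪, 𝒪_Y)`: against the
strategy `σ` of ONE, a family `𝒱` is answered by what its closure leaves of ONE's last move. -/
def mbHistory (σ : List (Set X) → Set X) (h : List (Set (Set X))) : List (Set X) :=
  h.foldl (fun T 𝒱 => T ++ [σ T \ closure (⋃₀ 𝒱)]) []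

/-- The play of TWO in `MB(Y, X)` whose initial segments are the histories `mbHistory σ`. -/
def mbPlay (σ : List (Set X) → Set X) (V : ℕ → Set (Set X)) (n : ℕ) : Set X :=
  σ (mbHistory σ (List.ofFn fun i : Fin n => V i)) \ closure (⋃₀ V n)

theorem mbHistory_ofFn (σ : List (Set X) → Set X) (V : ℕ → Set (Set X)) (n : ℕ) :
    mbHistory σ (List.ofFn fun i : Fin n => V i) = List.ofFn fun i : Fin n => mbPlay σ V i := by
  induction n with
  | zero => rfl
  | succ n ih =>
    rw [List.ofFn_succ_last, List.ofFn_succ_last, mbHistory, List.foldl_append]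
    simp only [Fin.val_castSucc, Fin.val_last, List.foldl_cons, List.foldl_nil]
    rw [← ih]
    rfl

theorem oneWinsGomega_of_oneWinsMB [T2Space X] {Y : Set X} (hX : HasConnectedPiBase X)
    (hMB : OneWinsMB X Y) : OneWinsGomega X Y := by
  obtain ⟨P, hP, hPbase⟩ := hX
  choose! core hcoreP hcore_sub using hPbase
  obtain ⟨σ, hσ, hσwin⟩ := hMB
  refine ⟨fun h => nonDenseCover (core (σ (mbHistory σ h))),
    fun h => isOpenCover_nonDenseCover _, fun V hV hYV => ?_⟩
  have hT (n : ℕ) : IsOpen (mbPlay σ V n) ∧ (mbPlay σ V n).Nonempty ∧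
      mbPlay σ V n ⊆ σ (List.ofFn fun i : Fin n => mbPlay σ V i) := by
    induction n using Nat.strong_induction_on with
    | _ n ih =>
      obtain ⟨hopen, hne, -⟩ := hσ (mbPlay σ V) n ih
      rw [← mbHistory_ofFn] at hopen hne ⊢
      obtain ⟨-, hconn, hnt⟩ := hP _ (hcoreP _ hopen hne)
      obtain ⟨x, hx, hxV⟩ := not_subset.1 ((hV n).not_subset_closure_sUnion hconn hnt)
      exact ⟨hopen.sdiff isClosed_closure, ⟨x, hcore_sub _ hopen hne hx, hxV⟩, sdiff_subset⟩
  obtain ⟨y, hyY, hy⟩ := hσwin (mbPlay σ V) hT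
  obtain ⟨n, hyn⟩ := mem_iUnion.1 (hYV hyY)
  have hyT : y ∈ mbPlay σ V n :=
    (hσ (mbPlay σ V) (n + 1) fun k _ => hT k).2.2 n rfl (mem_iInter.1 hy (n + 1))
  exact hyT.2 (subset_closure hyn)

theorem hasConnectedPiBase_of_locallyConnectedSpace [LocallyConnectedSpace X] [PerfectSpace X] :
    HasConnectedPiBase X := by
  refine ⟨{B | IsOpen B ∧ IsConnected B ∧ B.Nontrivial}, fun B hB => hB, ?_⟩
  rintro U hU ⟨x, hx⟩
  have hopen : IsOpen (connectedComponentIn U x) := hU.connectedComponentIn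
  refine ⟨connectedComponentIn U x,
    ⟨hopen, isConnected_connectedComponentIn_iff.2 hx, ?_⟩, connectedComponentIn_subset U x⟩
  rw [nontrivial_iff_ne_singleton (mem_connectedComponentIn hx)]
  exact fun h => not_isOpen_singleton x (h ▸ hopen)

theorem statement5_general [T2Space X] [LocallyCompactSpace X] [Nonempty X] {Y : Set X}
    (hX : HasConnectedPiBase X) (hY : Y ∈ residual X) : OneWinsGomega X Y :=
  oneWinsGomega_of_oneWinsMB hX (oneWinsMB_of_mem_residual hY)

end SelectiveScreenability

/-- ONE has a winning strategy in `G^ω_d(𝒪,𝒪_ℙ)` on the real line, where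
`ℙ` is the set of irrational numbers. -/
theorem statement5 : OneWinsGomega ℝ {x : ℝ | Irrational x} :=
  statement5_general hasConnectedPiBase_of_locallyConnectedSpace eventually_residual_irrational

end SSG
end

section
/- Let Y be a dense Gδ subset of a topological space X. Then player ONE has a winning strategy in the Banach–Mazur game MB(X) if, and only if, ONE has a winning strategy in the Banach–Mazur game MB(Y,X). -/
namespace SSG

/-!
Let ONE pretend that TWO's `n`-th move was `Tₙ ∩ Uₙ` instead of `Tₙ`, where `Uₙ` is a dense open
set: density keeps the pretended move nonempty, and as ONE's next move lies inside it, the play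
ends in `⋂ₙ Uₙ` as well as in the original target. Hence whether ONE can win depends on the
target only up to a meagre set.
-/

section BanachMazur

variable {X : Type*}

/-- The strategy that answers a history `T₀, T₁, …` of TWO's moves as `σ` answers
`T₀ ∩ U 0, T₁ ∩ U 1, …`. It turns a strategy for one target set into a strategy that also
forces the play into every `U n`. -/
def shrinkReplies (U : ℕ → Set X) (σ : List (Set X) → Set X) (h : List (Set X)) : Set X :=
  σ (h.mapIdx fun i t => t ∩ U i)

theorem shrinkReplies_ofFn (U : ℕ → Set X) (σ : List (Set X) → Set X) (T : ℕ → Set X) (n : ℕ) :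
    shrinkReplies U σ (List.ofFn fun i : Fin n => T i) =
      σ (List.ofFn fun i : Fin n => T i ∩ U i) :=
  congrArg σ (List.ext_getElem (by simp) (by simp))

variable [TopologicalSpace X]

/-- `T` is a legal answer of TWO to the move `O` of ONE in a Banach–Mazur game on `X`. -/
def LegalMBReply (O T : Set X) : Prop :=
  IsOpen T ∧ T.Nonempty ∧ T ⊆ O

theorem LegalMBReply.inter {O T U : Set X} (hT : LegalMBReply O T) (hU : IsOpen U)
    (hUd : Dense U) : LegalMBReply O (T ∩ U) :=
  ⟨hT.1.inter hU, hUd.inter_open_nonempty T hT.1 hT.2.1, Set.inter_subset_left.trans hT.2.2⟩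

/-- `σ` is a strategy for ONE in a Banach–Mazur game on `X`: it moves legally as long as TWO
does. This is the first half of the definition of `OneWinsMB`. -/
def IsOneMBStrategy (σ : List (Set X) → Set X) : Prop :=
  ∀ (T : ℕ → Set X) (n : ℕ),
    (∀ k < n, LegalMBReply (σ (List.ofFn fun i : Fin k => T i)) (T k)) →
      IsOpen (σ (List.ofFn fun i : Fin n => T i)) ∧
      (σ (List.ofFn fun i : Fin n => T i)).Nonempty ∧
      ∀ k : ℕ, n = k + 1 → σ (List.ofFn fun i : Fin n => T i) ⊆ T k

theorem IsOneMBStrategy.iInter_subset {σ : List (Set X) → Set X} (hσ : IsOneMBStrategy σ)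
    {T : ℕ → Set X} (hT : ∀ n, LegalMBReply (σ (List.ofFn fun i : Fin n => T i)) (T n)) :
    ⋂ n : ℕ, σ (List.ofFn fun i : Fin n => T i) ⊆ ⋂ n, T n :=
  Set.subset_iInter fun n =>
    (Set.iInter_subset _ (n + 1)).trans <| (hσ T (n + 1) fun k _ => hT k).2.2 n rfl

theorem IsOneMBStrategy.shrinkReplies {σ : List (Set X) → Set X} (hσ : IsOneMBStrategy σ)
    {U : ℕ → Set X} (hU : ∀ n, IsOpen (U n)) (hUd : ∀ n, Dense (U n)) :
    IsOneMBStrategy (shrinkReplies U σ) := by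
  intro T n hT
  simp only [shrinkReplies_ofFn] at hT ⊢
  obtain ⟨hopen, hne, hsub⟩ :=
    hσ (fun m => T m ∩ U m) n fun k hk => (hT k hk).inter (hU k) (hUd k)
  exact ⟨hopen, hne, fun k hk => (hsub k hk).trans Set.inter_subset_left⟩

theorem OneWinsMB.mono {Y Z : Set X} (hY : OneWinsMB X Y) (hYZ : Y ⊆ Z) : OneWinsMB X Z := by
  obtain ⟨σ, hσ, hwin⟩ := hY
  exact ⟨σ, hσ, fun T hT => (hwin T hT).mono (Set.inter_subset_inter_left _ hYZ)⟩

theorem OneWinsMB.inter_iInter_of_isOpen {Y : Set X} (hY : OneWinsMB X Y) {U : ℕ → Set X}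
    (hU : ∀ n, IsOpen (U n)) (hUd : ∀ n, Dense (U n)) : OneWinsMB X (Y ∩ ⋂ n, U n) := by
  obtain ⟨σ, hσ : IsOneMBStrategy σ, hwin⟩ := hY
  refine ⟨shrinkReplies U σ, hσ.shrinkReplies hU hUd, fun T hT => ?_⟩
  simp only [shrinkReplies_ofFn] at hT ⊢
  have hTU (n : ℕ) : LegalMBReply (σ (List.ofFn fun i : Fin n => T i ∩ U i)) (T n ∩ U n) :=
    LegalMBReply.inter (hT n) (hU n) (hUd n)
  obtain ⟨x, hxY, hxσ⟩ := hwin (fun n => T n ∩ U n) hTU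
  have hxU : x ∈ ⋂ n, U n :=
    Set.iInter_mono (fun _ => Set.inter_subset_right) (hσ.iInter_subset hTU hxσ)
  exact ⟨x, ⟨hxY, hxU⟩, hxσ⟩

theorem exists_seq_isOpen_dense_of_mem_residual {D : Set X} (hD : D ∈ residual X) :
    ∃ U : ℕ → Set X, (∀ n, IsOpen (U n)) ∧ (∀ n, Dense (U n)) ∧ ⋂ n, U n ⊆ D := by
  obtain ⟨S, hopen, hdense, hS, hSD⟩ := mem_residual_iff.mp hD
  obtain ⟨U, hU⟩ := (hS.insert Set.univ).exists_eq_range (Set.insert_nonempty _ _)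
  have hU_mem (n : ℕ) : U n ∈ insert Set.univ S := hU.symm ▸ Set.mem_range_self n
  refine ⟨U, fun n => Set.forall_insert_of_forall hopen isOpen_univ _ (hU_mem n),
    fun n => Set.forall_insert_of_forall hdense dense_univ _ (hU_mem n), ?_⟩
  rwa [← Set.sInter_range, ← hU, Set.sInter_insert, Set.univ_inter]

theorem OneWinsMB.inter_of_mem_residual {Y D : Set X} (hY : OneWinsMB X Y)
    (hD : D ∈ residual X) : OneWinsMB X (Y ∩ D) := by
  obtain ⟨U, hU, hUd, hUD⟩ := exists_seq_isOpen_dense_of_mem_residual hD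
  exact (hY.inter_iInter_of_isOpen hU hUd).mono (Set.inter_subset_inter_right Y hUD)

theorem OneWinsMB.mono_of_residual {Y Z : Set X} (hY : OneWinsMB X Y)
    (hYZ : Y ≤ᶠ[residual X] Z) : OneWinsMB X Z :=
  (hY.inter_of_mem_residual hYZ).mono fun _ hx => hx.2 hx.1

theorem statement6_general {Y Z : Set X} (hYZ : Y =ᶠ[residual X] Z) :
    OneWinsMB X Y ↔ OneWinsMB X Z :=
  ⟨fun hY => hY.mono_of_residual hYZ.le, fun hZ => hZ.mono_of_residual hYZ.symm.le⟩

end BanachMazur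

/-- If `Y` is a dense Gδ subset of `X`, then ONE has a winning strategy in
`MB(X)` iff ONE has a winning strategy in `MB(Y,X)`. -/
theorem statement6 {X : Type*} [TopologicalSpace X] (Y : Set X)
    (hdense : Dense Y) (hGδ : IsGδ Y) :
    OneWinsMB X Set.univ ↔ OneWinsMB X Y :=
  statement6_general (Filter.eventuallyEq_univ.mpr (residual_of_dense_Gδ hGδ hdense)).symm

end SSG
end

section
/- For a topological space X the following are equivalent: (1) X is ultraparacompact; (2) player TWO has a winning strategy in the game G^1_d(𝒪,𝒪) on X, i.e., every open cover 𝒰 of X admits a discrete family of open sets, each contained in some member of 𝒰, whose union is X. -/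
namespace SSG

section

variable {X : Type*} [TopologicalSpace X] {𝒜 : Set (Set X)}

theorem IsDiscreteFam.pairwise_disjoint (h𝒜 : IsDiscreteFam 𝒜) : 𝒜.Pairwise Disjoint := by
  refine fun A hA B hB hAB => Set.disjoint_left.2 fun x hxA hxB => hAB ?_
  obtain ⟨U, hU, hsub⟩ := h𝒜 x
  have hxU : x ∈ U := mem_of_mem_nhds hU
  exact hsub ⟨hA, x, hxA, hxU⟩ ⟨hB, x, hxB, hxU⟩

theorem IsOpenCover.isDiscreteFam_of_pairwise_disjoint (h𝒜 : IsOpenCover 𝒜)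
    (hdisj : 𝒜.Pairwise Disjoint) : IsDiscreteFam 𝒜 := by
  intro x
  obtain ⟨V, hV, hxV⟩ : x ∈ ⋃₀ 𝒜 := h𝒜.2 ▸ Set.mem_univ x
  have eq_of_meets : ∀ A ∈ 𝒜, (A ∩ V).Nonempty → A = V := fun A hA hAV =>
    hdisj.eq hA hV (Set.not_disjoint_iff_nonempty_inter.2 hAV)
  exact ⟨V, (h𝒜.1 V hV).mem_nhds hxV, fun A hA B hB =>
    (eq_of_meets A hA.1 hA.2).trans (eq_of_meets B hB.1 hB.2).symm⟩

end

/-- A space is ultraparacompact iff TWO has a winning strategy in the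
one-inning game `G^1_d(𝒪,𝒪)`. -/
theorem statement7 {X : Type*} [TopologicalSpace X] :
    Ultraparacompact X ↔ TwoWinsGone X Set.univ := by
  constructor
  · intro hX 𝒰 h𝒰
    obtain ⟨𝒱, hrefine, hdisj, hcover⟩ := hX 𝒰 h𝒰
    have hopen : IsOpenCover 𝒱 := ⟨fun V hV => (hrefine V hV).1, hcover⟩
    exact ⟨𝒱, ⟨hopen.isDiscreteFam_of_pairwise_disjoint hdisj, hrefine⟩, hcover.ge⟩
  · intro hX 𝒰 h𝒰
    obtain ⟨𝒱, ⟨hdiscrete, hrefine⟩, hcover⟩ := hX 𝒰 h𝒰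
    exact ⟨𝒱, hrefine, hdiscrete.pairwise_disjoint, Set.univ_subset_iff.1 hcover⟩

end SSG
end

section
/- Let X be a metric space and let Y be a closed subspace of X that is ultraparacompact in its subspace topology. Then player TWO has a winning strategy in the game G^1_d(𝒪,𝒪_Y) on X, i.e., for every open cover 𝒰 of X there is a discrete family of open subsets of X, each contained in some member of 𝒰, whose union contains Y. -/
namespace SSG

/-!
A disjoint open cover of `Y` is automatically a discrete family of closed sets, and since `Y` is
closed it remains one in `X`. In a collectionwise normal space it can be swelled to a discrete
family of open sets, which are then cut down to members of the given cover of `X`.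

In a metric space, choose for every point `x` a radius `r x` such that `ball x (r x)` meets at most
one member of the family, and replace each member by the union of the balls `ball x (r x / 4)`
centred at its points. If two swollen members meet `ball z (r z / 4)`, with balls centred at `x`
and `y`, then whichever of `x`, `y`, `z` has the largest radius has both `x` and `y` in its ball,
so the two members are equal.
-/

open Set Topology Metric Function

universe u

/-- Discreteness of an indexed family of sets: every point has a neighborhood meeting the sets of
at most one index. Unlike for `IsDiscreteFam`, repeated nonempty sets are not allowed, so that
discreteness of an expansion `W` of a family of sets forces `W` to separate its members. -/
def IsDiscreteIndexed {ι X : Type*} [TopologicalSpace X] (f : ι → Set X) : Prop :=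
  ∀ x : X, ∃ U ∈ 𝓝 x, {i | (f i ∩ U).Nonempty}.Subsingleton

/-- A collectionwise normal space: every discrete family of closed sets expands to a discrete
family of open sets. No separation axiom is included, as for `NormalSpace`. Restricting the index
types to the universe of `X` loses nothing, since distinct indices carry distinct nonempty sets. -/
class CollectionwiseNormalSpace (X : Type u) [TopologicalSpace X] : Prop where
  exists_isOpen_expansion : ∀ {ι : Type u} {f : ι → Set X}, IsDiscreteIndexed f →
    (∀ i, IsClosed (f i)) →
    ∃ W : ι → Set X, (∀ i, IsOpen (W i)) ∧ (∀ i, f i ⊆ W i) ∧ IsDiscreteIndexed W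

section TopologicalSpace

variable {ι X Z : Type*} [TopologicalSpace X] [TopologicalSpace Z] {f g : ι → Set X}

theorem IsDiscreteIndexed.mono (hf : IsDiscreteIndexed f) (hgf : ∀ i, g i ⊆ f i) :
    IsDiscreteIndexed g := fun x ↦
  let ⟨U, hU, hUf⟩ := hf x
  ⟨U, hU, hUf.anti fun i hi ↦ hi.mono (inter_subset_inter_left U (hgf i))⟩

theorem IsDiscreteIndexed.isDiscreteFam_range (hf : IsDiscreteIndexed f) :
    IsDiscreteFam (range f) := by
  intro x
  obtain ⟨U, hU, hUf⟩ := hf x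
  refine ⟨U, hU, ?_⟩
  rintro _ ⟨⟨i, rfl⟩, hi⟩ _ ⟨⟨j, rfl⟩, hj⟩
  exact congrArg f (hUf hi hj)

theorem IsDiscreteIndexed.image_isClosedEmbedding {e : X → Z} (he : IsClosedEmbedding e)
    (hf : IsDiscreteIndexed f) : IsDiscreteIndexed fun i ↦ e '' f i := by
  intro z
  by_cases hz : z ∈ range e
  · obtain ⟨x, rfl⟩ := hz
    obtain ⟨U, hU, hUf⟩ := hf x
    rw [he.nhds_eq_comap] at hU
    obtain ⟨V, hV, hVU⟩ := hU
    refine ⟨V, hV, hUf.anti ?_⟩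
    rintro i ⟨_, ⟨y, hy, rfl⟩, hyV⟩
    exact ⟨y, hy, hVU hyV⟩
  · refine ⟨(range e)ᶜ, he.isClosed_range.isOpen_compl.mem_nhds hz, ?_⟩
    rintro i ⟨_, ⟨y, -, rfl⟩, hy⟩
    exact absurd (mem_range_self y) hy

theorem isDiscreteIndexed_of_isOpen_of_pairwise_disjoint (hopen : ∀ i, IsOpen (f i))
    (hdisj : Pairwise (Disjoint on f)) (hcover : ⋃ i, f i = univ) : IsDiscreteIndexed f := by
  intro x
  obtain ⟨k, hk⟩ := iUnion_eq_univ_iff.1 hcover x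
  have eq_of_meets {i : ι} (hi : (f i ∩ f k).Nonempty) : i = k :=
    hdisj.eq (not_disjoint_iff_nonempty_inter.2 hi)
  exact ⟨f k, (hopen k).mem_nhds hk, fun i hi j hj ↦ (eq_of_meets hi).trans (eq_of_meets hj).symm⟩

theorem isClosed_of_isOpen_of_pairwise_disjoint (hopen : ∀ i, IsOpen (f i))
    (hdisj : Pairwise (Disjoint on f)) (hcover : ⋃ i, f i = univ) (i : ι) : IsClosed (f i) := by
  refine isClosed_of_closure_subset fun x hx ↦ ?_
  obtain ⟨k, hk⟩ := iUnion_eq_univ_iff.1 hcover x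
  have hmeet : (f k ∩ f i).Nonempty := mem_closure_iff.1 hx _ (hopen k) hk
  exact hdisj.eq (not_disjoint_iff_nonempty_inter.2 hmeet) ▸ hk

theorem IsOpenCover.preimage {e : X → Z} (he : Continuous e) {𝒰 : Set (Set Z)}
    (h𝒰 : IsOpenCover 𝒰) : IsOpenCover ((e ⁻¹' ·) '' 𝒰) := by
  refine ⟨forall_mem_image.2 fun U hU ↦ (h𝒰.1 U hU).preimage he, ?_⟩
  rw [sUnion_image, ← preimage_iUnion₂, ← sUnion_eq_biUnion, h𝒰.2, preimage_univ]

end TopologicalSpace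

section PseudoMetricSpace

variable {ι X : Type*} [PseudoMetricSpace X] {f : ι → Set X}

theorem IsDiscreteIndexed.exists_radius (hf : IsDiscreteIndexed f) (x : X) :
    ∃ r > 0, {i | (f i ∩ ball x r).Nonempty}.Subsingleton :=
  let ⟨_, hU, hUf⟩ := hf x
  let ⟨r, hr, hrU⟩ := Metric.mem_nhds_iff.1 hU
  ⟨r, hr, hUf.anti fun i hi ↦ hi.mono (inter_subset_inter_right (f i) hrU)⟩

theorem isDiscreteIndexed_iUnion_ball {r : X → ℝ} (hr : ∀ x, 0 < r x)
    (hrf : ∀ x, {i | (f i ∩ ball x (r x)).Nonempty}.Subsingleton) :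
    IsDiscreteIndexed fun i ↦ ⋃ x ∈ f i, ball x (r x / 4) := by
  intro z
  refine ⟨ball z (r z / 4), ball_mem_nhds z (by linarith [hr z]), ?_⟩
  have exists_near {i : ι} (hi : ((⋃ x ∈ f i, ball x (r x / 4)) ∩ ball z (r z / 4)).Nonempty) :
      ∃ x ∈ f i, dist x z < (r x + r z) / 4 := by
    obtain ⟨p, hp, hpz⟩ := hi
    obtain ⟨x, hx, hpx⟩ := mem_iUnion₂.1 hp
    refine ⟨x, hx, ?_⟩
    linarith [dist_triangle_left x z p, mem_ball.1 hpx, mem_ball.1 hpz]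
  intro i hi j hj
  obtain ⟨x, hx, hxz⟩ := exists_near hi
  obtain ⟨y, hy, hyz⟩ := exists_near hj
  wlog hyx : r y ≤ r x generalizing i j x y
  · exact (this hj hi y hy hyz x hx hxz (le_of_not_ge hyx)).symm
  rcases le_total (r x) (r z) with hxz_le | hzx_le
  · have hxball : dist x z < r z := by linarith [hr z]
    have hyball : dist y z < r z := by linarith [hr z]
    exact hrf z ⟨x, hx, hxball⟩ ⟨y, hy, hyball⟩
  · have hyball : dist y x < r x := by linarith [dist_triangle_right y x z]
    exact hrf x ⟨x, hx, mem_ball_self (hr x)⟩ ⟨y, hy, hyball⟩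

theorem IsDiscreteIndexed.exists_isOpen_expansion (hf : IsDiscreteIndexed f) :
    ∃ W : ι → Set X, (∀ i, IsOpen (W i)) ∧ (∀ i, f i ⊆ W i) ∧ IsDiscreteIndexed W := by
  choose r hr hrf using hf.exists_radius
  refine ⟨fun i ↦ ⋃ x ∈ f i, ball x (r x / 4), fun i ↦ isOpen_biUnion fun _ _ ↦ isOpen_ball,
    fun i x hx ↦ mem_biUnion hx (mem_ball_self ?_), isDiscreteIndexed_iUnion_ball hr hrf⟩
  linarith [hr x]

end PseudoMetricSpace

instance {X : Type*} [TopologicalSpace X] [TopologicalSpace.PseudoMetrizableSpace X] :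
    CollectionwiseNormalSpace X where
  exists_isOpen_expansion hf _ :=
    letI := TopologicalSpace.pseudoMetrizableSpacePseudoMetric X
    hf.exists_isOpen_expansion

theorem Ultraparacompact.exists_isClosed_refinement {X : Type u} [TopologicalSpace X] {Y : Set X}
    (hY : Ultraparacompact Y) (hYclosed : IsClosed Y) {𝒰 : Set (Set X)} (h𝒰 : IsOpenCover 𝒰) :
    ∃ (ι : Type u) (F : ι → Set X), IsDiscreteIndexed F ∧ (∀ i, IsClosed (F i)) ∧
      (∀ i, ∃ U ∈ 𝒰, F i ⊆ U) ∧ Y ⊆ ⋃ i, F i := by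
  obtain ⟨𝒱, h𝒱, h𝒱disj, h𝒱cover⟩ := hY _ (h𝒰.preimage continuous_subtype_val)
  have hopen (V : 𝒱) : IsOpen (V : Set Y) := (h𝒱 V V.2).1
  have hdisj : Pairwise (Disjoint on ((↑) : 𝒱 → Set Y)) := h𝒱disj.subtype
  have hcover : ⋃ V : 𝒱, (V : Set Y) = univ := sUnion_eq_iUnion.symm.trans h𝒱cover
  refine ⟨𝒱, fun V ↦ (↑) '' (V : Set Y), ?_, fun V ↦ ?_, fun V ↦ ?_, ?_⟩
  · exact (isDiscreteIndexed_of_isOpen_of_pairwise_disjoint hopen hdisj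
      hcover).image_isClosedEmbedding hYclosed.isClosedEmbedding_subtypeVal
  · exact (isClosed_of_isOpen_of_pairwise_disjoint hopen hdisj hcover V).trans hYclosed
  · obtain ⟨-, _, ⟨U, hU, rfl⟩, hVU⟩ := h𝒱 V V.2
    exact ⟨U, hU, image_subset_iff.2 hVU⟩
  · rw [← image_iUnion, hcover, image_univ, Subtype.range_coe]

theorem statement9_general {X : Type*} [TopologicalSpace X] [CollectionwiseNormalSpace X]
    (Y : Set X) (hYclosed : IsClosed Y) (hY : Ultraparacompact ↥Y) : TwoWinsGone X Y := by
  intro 𝒰 h𝒰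
  obtain ⟨ι, F, hFdiscrete, hFclosed, hFrefine, hYF⟩ := hY.exists_isClosed_refinement hYclosed h𝒰
  obtain ⟨W, hWopen, hFW, hWdiscrete⟩ :=
    CollectionwiseNormalSpace.exists_isOpen_expansion hFdiscrete hFclosed
  choose U hU hFU using hFrefine
  refine ⟨range fun i ↦ W i ∩ U i, ⟨?_, forall_mem_range.2 fun i ↦ ?_⟩, ?_⟩
  · exact (hWdiscrete.mono fun i ↦ inter_subset_left).isDiscreteFam_range
  · exact ⟨(hWopen i).inter (h𝒰.1 _ (hU i)), U i, hU i, inter_subset_right⟩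
  · rw [sUnion_range]
    exact hYF.trans (iUnion_mono fun i ↦ subset_inter (hFW i) (hFU i))

/-- If `X` is a metric space and `Y ⊆ X` is closed and ultraparacompact in
its subspace topology, then TWO has a winning strategy in `G^1_d(𝒪,𝒪_Y)` on `X`. -/
theorem statement9 {X : Type*} [MetricSpace X] (Y : Set X) (hYclosed : IsClosed Y)
    (hY : Ultraparacompact ↥Y) :
    TwoWinsGone X Y :=
  statement9_general Y hYclosed hY

end SSG
end
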